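/- For every Cayley tree T labelled with [n]_0, the weary permutation of T coincides with the bird's-eye permutation of its preference sequence: ω_T = ω_{π_T}. -/

import Mathlib

/-!
Vertex `c` of the tree, seen as a car, prefers the spot right after the step at which its parent
is visited. From that step on `c` is a candidate of the priority-first search, so all steps between
the visit of its parent and its own visit go to smaller vertices. Inductively those are cars that
have already parked at the spots numbered by their visiting steps, while the spot numbered by the
visiting step of `c` is still free. Hence `c` parks exactly there (`spot_pref`), which says that
`spot` inverts the weary permutation; that the latter is a bijection of `{0,…,n}` is
`visit_injOn` and `visit_surjOn`.
-/

open scoped Classical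

namespace WearyParking

/-- `f` is the parent function of a Cayley tree on `{0,…,n}` rooted at `0`:
`f 0 = 0`, `f` is pinned to `0` outside `{1,…,n}`, `f` maps `{1,…,n}` into `{0,…,n}`,
and every vertex reaches the root under iteration. -/
def IsCayleyTree (n : ℕ) (f : ℕ → ℕ) : Prop :=
  f 0 = 0 ∧ (∀ i, n < i → f i = 0) ∧
  (∀ i, 1 ≤ i → i ≤ n → f i ≤ n) ∧
  (∀ i, 1 ≤ i → i ≤ n → ∃ k, f^[k] i = 0)

/-- A non-root vertex `i` is a record of the tree if it is greater than
all of its ancestors. -/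
def IsRecord (n : ℕ) (f : ℕ → ℕ) (i : ℕ) : Prop :=
  1 ≤ i ∧ i ≤ n ∧ ∀ k, 1 ≤ k → f^[k] i < i

/-- The smallest record larger than `i`. -/
noncomputable def nextRecord (n : ℕ) (f : ℕ → ℕ) (i : ℕ) : ℕ :=
  sInf {j | IsRecord n f j ∧ i < j}

/-- The record (blob) code of the tree, a function on `{1,…,n-1}`:
at a non-record position it records the parent, and at a record position it
records the parent of the next record. -/
noncomputable def blob (n : ℕ) (f : ℕ → ℕ) (i : ℕ) : ℕ :=
  if IsRecord n f i then f (nextRecord n f i) else f i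

/-- Number of children of vertex `v` in the tree. -/
def numChildren (n : ℕ) (f : ℕ → ℕ) (v : ℕ) : ℕ :=
  ((Finset.Icc 1 n).filter fun i => f i = v).card

/-- The list of the first `i+1` vertices visited by the priority-first search:
start at the root `0`; at each step visit the smallest unvisited vertex whose
parent has been visited. -/
noncomputable def wearyList (n : ℕ) (f : ℕ → ℕ) : ℕ → List ℕ
  | 0 => [0]
  | (i + 1) =>
      wearyList n f i ++
        [sInf {v | 1 ≤ v ∧ v ≤ n ∧ v ∉ wearyList n f i ∧ f v ∈ wearyList n f i}]

/-- The weary permutation of the tree: `weary n f i` is the `i`-th vertex visited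
by the priority-first search (with `weary n f 0 = 0`). -/
noncomputable def weary (n : ℕ) (f : ℕ → ℕ) (i : ℕ) : ℕ :=
  (wearyList n f n).getD i 0

/-- The inverse of the weary permutation. -/
noncomputable def wearyInv (n : ℕ) (f : ℕ → ℕ) (v : ℕ) : ℕ :=
  sInf {i | weary n f i = v}

/-- The preference sequence `π_T` of the tree: `π_T i = ω_T⁻¹ (f_T i) + 1`. -/
noncomputable def pref (n : ℕ) (f : ℕ → ℕ) (i : ℕ) : ℕ :=
  wearyInv n f (f i) + 1

/-- Parent function of the priority tree `pt(T)`: `ω_T⁻¹ ∘ f_T ∘ ω_T`. -/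
noncomputable def prioParent (n : ℕ) (f : ℕ → ℕ) (i : ℕ) : ℕ :=
  wearyInv n f (f (weary n f i))

/-- The list of spots occupied by cars `1,…,c` in the classical parking process:
car `c` parks at the first spot `≥ π c` not occupied by an earlier car. -/
noncomputable def spotList (π : ℕ → ℕ) : ℕ → List ℕ
  | 0 => []
  | (c + 1) => spotList π c ++ [sInf {s | π (c + 1) ≤ s ∧ s ∉ spotList π c}]

/-- The spot where car `c` ends up in the classical parking process. -/
noncomputable def spot (π : ℕ → ℕ) (c : ℕ) : ℕ :=
  (spotList π c).getD (c - 1) 0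

/-- `π` is a parking function of length `n`: preferences lie in `{1,…,n}`
(pinned to `1` outside `{1,…,n}`) and every car parks within the `n` spots. -/
def IsParkingFun (n : ℕ) (π : ℕ → ℕ) : Prop :=
  (∀ c, 1 ≤ c → c ≤ n → 1 ≤ π c ∧ π c ≤ n) ∧
  (∀ c, c = 0 ∨ n < c → π c = 1) ∧
  (∀ c, 1 ≤ c → c ≤ n → spot π c ≤ n)

/-- The bird's-eye permutation `ω_π`: the car parked at spot `i` (and `0` at `0`). -/
noncomputable def birdsEye (n : ℕ) (π : ℕ → ℕ) (i : ℕ) : ℕ :=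
  if i = 0 then 0 else sInf {c | 1 ≤ c ∧ c ≤ n ∧ spot π c = i}

/-- The inverse of the bird's-eye permutation. -/
noncomputable def birdsEyeInv (n : ℕ) (π : ℕ → ℕ) (c : ℕ) : ℕ :=
  sInf {i | birdsEye n π i = c}

/-- Parent function of the parking tree `PT(π)`: `f_π i = ω_π (π i - 1)`. -/
noncomputable def ptParent (n : ℕ) (π : ℕ → ℕ) (i : ℕ) : ℕ :=
  if 1 ≤ i ∧ i ≤ n then birdsEye n π (π i - 1) else 0

/-- `v` is a record of the parking function `π`, i.e. a left-to-right maximum of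
the word `ω_π(1) ω_π(2) ⋯ ω_π(n)`. -/
def IsPfRecord (n : ℕ) (π : ℕ → ℕ) (v : ℕ) : Prop :=
  ∃ i, 1 ≤ i ∧ i ≤ n ∧ birdsEye n π i = v ∧ ∀ j, 1 ≤ j → j < i → birdsEye n π j < v

/-- The waiting time of the tree: `wait T = Σ_{i=1}^n (i - f_{pt(T)}(i))`. -/
noncomputable def wait (n : ℕ) (f : ℕ → ℕ) : ℕ :=
  ∑ i ∈ Finset.Icc 1 n, (i - prioParent n f i)

/-- The number of priority small ascents of the tree. -/
noncomputable def psa (n : ℕ) (f : ℕ → ℕ) : ℕ :=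
  ((Finset.Icc 1 n).filter fun i => prioParent n f i = i - 1).card

/-- The number of children of the root. -/
def degRoot (n : ℕ) (f : ℕ → ℕ) : ℕ := numChildren n f 0

/-- The children sequence: `chseq n f j` is the number of vertices with exactly
`j` children. -/
def chseq (n : ℕ) (f : ℕ → ℕ) (j : ℕ) : ℕ :=
  ((Finset.Icc 0 n).filter fun v => numChildren n f v = j).card

/-- The number of probes of the parking function: `n` plus the total displacement. -/
noncomputable def probes (n : ℕ) (π : ℕ → ℕ) : ℕ :=
  n + ∑ c ∈ Finset.Icc 1 n, (spot π c - π c)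

/-- The number of lucky cars of `π`: cars parking at their preferred spot. -/
noncomputable def lucky (n : ℕ) (π : ℕ → ℕ) : ℕ :=
  ((Finset.Icc 1 n).filter fun c => spot π c = π c).card

/-- The number of `1`s in `π`. -/
def ones (n : ℕ) (π : ℕ → ℕ) : ℕ :=
  ((Finset.Icc 1 n).filter fun c => π c = 1).card

/-- The multiplicity of the value `v` in the parking function `π`. -/
def multIn (n : ℕ) (π : ℕ → ℕ) (v : ℕ) : ℕ :=
  ((Finset.Icc 1 n).filter fun c => π c = v).card

/-- The multiplicity sequence: `multSeq n π j` is the number of values in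
`{1,…,n+1}` appearing exactly `j` times in `π`. -/
def multSeq (n : ℕ) (π : ℕ → ℕ) (j : ℕ) : ℕ :=
  ((Finset.Icc 1 (n + 1)).filter fun v => multIn n π v = j).card

/-- The tree is a path graph with endpoints `0` and `n`: every vertex has at most
one child and `n` is the (unique) leaf. -/
def IsPathTree (n : ℕ) (f : ℕ → ℕ) : Prop :=
  (∀ v, v ≤ n → numChildren n f v ≤ 1) ∧ numChildren n f n = 0

/-- `g` is the parent map of a rooted forest on `{1,…,n}` rooted at `{1,…,k}`:
the vertices `1,…,k` are roots (fixed points), every other vertex of `{1,…,n}` has a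
parent in `{1,…,n}`, every vertex reaches one of the roots under iteration, and `g`
is pinned to `0` outside `{1,…,n}`. -/
def IsForestRootedAt (n k : ℕ) (g : ℕ → ℕ) : Prop :=
  (∀ i, 1 ≤ i → i ≤ k → g i = i) ∧
  (∀ i, k < i → i ≤ n → 1 ≤ g i ∧ g i ≤ n) ∧
  (∀ i, 1 ≤ i → i ≤ n → ∃ m, 1 ≤ g^[m] i ∧ g^[m] i ≤ k) ∧
  (∀ i, i = 0 ∨ n < i → g i = 0)

/-- The vertex visited at step `i` of the priority-first search, as the last entry of
`wearyList n f i`; unlike `weary`, it does not refer to the completed list. -/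
noncomputable def visit (n : ℕ) (f : ℕ → ℕ) : ℕ → ℕ
  | 0 => 0
  | (i + 1) => sInf {v | 1 ≤ v ∧ v ≤ n ∧ v ∉ wearyList n f i ∧ f v ∈ wearyList n f i}

lemma wearyList_eq_map (n : ℕ) (f : ℕ → ℕ) (i : ℕ) :
    wearyList n f i = (List.range (i + 1)).map (visit n f) := by
  induction i with
  | zero => simp [wearyList, visit]
  | succ i ih =>
    rw [List.range_succ, List.map_append, ← ih]
    simp [wearyList, visit]

lemma mem_wearyList {n : ℕ} {f : ℕ → ℕ} {i v : ℕ} :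
    v ∈ wearyList n f i ↔ ∃ j, j ≤ i ∧ visit n f j = v := by
  simp [wearyList_eq_map]

lemma weary_eq_visit {n : ℕ} {f : ℕ → ℕ} {i : ℕ} (hi : i ≤ n) :
    weary n f i = visit n f i := by
  simp [weary, wearyList_eq_map, List.getD_eq_getElem?_getD,
    List.getElem?_range (Nat.lt_succ_of_le hi)]

/-- The search never gets stuck before visiting all vertices: starting from any unvisited
vertex, the last unvisited vertex on its path to the root is a candidate. -/
lemma exists_candidate {n : ℕ} {f : ℕ → ℕ} (hf : IsCayleyTree n f) {i : ℕ} (hi : i < n) :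
    ∃ v, 1 ≤ v ∧ v ≤ n ∧ v ∉ wearyList n f i ∧ f v ∈ wearyList n f i := by
  obtain ⟨h0, -, hle, hroot⟩ := hf
  have hmem0 : 0 ∈ wearyList n f i := mem_wearyList.2 ⟨0, Nat.zero_le _, rfl⟩
  obtain ⟨v, hvn, hv⟩ : ∃ v, v ≤ n ∧ v ∉ wearyList n f i := by
    by_contra! hall
    have hsub : Finset.range (n + 1) ⊆ (wearyList n f i).toFinset := fun v hv =>
      List.mem_toFinset.2 (hall v (Nat.lt_succ_iff.1 (Finset.mem_range.1 hv)))
    have h1 := Finset.card_le_card hsub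
    have h2 := List.toFinset_card_le (wearyList n f i)
    have h3 : (wearyList n f i).length = i + 1 := by simp [wearyList_eq_map]
    simp at h1
    omega
  have hv1 : 1 ≤ v := Nat.one_le_iff_ne_zero.2 fun h => hv (h ▸ hmem0)
  have hex : ∃ k, f^[k] v ∈ wearyList n f i := by
    obtain ⟨k, hk⟩ := hroot v hv1 hvn
    exact ⟨k, hk ▸ hmem0⟩
  have hiter : ∀ k, f^[k] v ≤ n := by
    intro k
    induction k with
    | zero => exact hvn
    | succ k ih =>
      rw [Function.iterate_succ_apply']
      rcases Nat.eq_zero_or_pos (f^[k] v) with h | h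
      · simp [h, h0]
      · exact hle _ h ih
  obtain ⟨k, hk⟩ : ∃ k, Nat.find hex = k + 1 := by
    refine Nat.exists_eq_succ_of_ne_zero fun h => hv ?_
    have := Nat.find_spec hex
    rwa [h] at this
  have hu : f^[k] v ∉ wearyList n f i := Nat.find_min hex (by omega)
  refine ⟨f^[k] v, Nat.one_le_iff_ne_zero.2 fun h => hu (h ▸ hmem0), hiter k, hu, ?_⟩
  have := Nat.find_spec hex
  rwa [hk, Function.iterate_succ_apply'] at this

lemma visit_succ_spec {n : ℕ} {f : ℕ → ℕ} (hf : IsCayleyTree n f) {i : ℕ} (hi : i < n) :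
    1 ≤ visit n f (i + 1) ∧ visit n f (i + 1) ≤ n ∧
      visit n f (i + 1) ∉ wearyList n f i ∧ f (visit n f (i + 1)) ∈ wearyList n f i :=
  Nat.sInf_mem (exists_candidate hf hi)

lemma visit_injOn {n : ℕ} {f : ℕ → ℕ} (hf : IsCayleyTree n f) {i j : ℕ}
    (hi : i ≤ n) (hj : j ≤ n) (h : visit n f i = visit n f j) : i = j := by
  have key : ∀ a b, a < b → b ≤ n → visit n f a ≠ visit n f b := by
    intro a b hab hb heq
    obtain ⟨c, rfl⟩ : ∃ c, b = c + 1 := ⟨b - 1, by omega⟩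
    exact (visit_succ_spec hf hb).2.2.1 (mem_wearyList.2 ⟨a, by omega, heq⟩)
  rcases lt_trichotomy i j with hij | hij | hij
  · exact absurd h (key i j hij hj)
  · exact hij
  · exact absurd h.symm (key j i hij hi)

lemma visit_surjOn {n : ℕ} {f : ℕ → ℕ} (hf : IsCayleyTree n f) {v : ℕ} (hv : v ≤ n) :
    ∃ i, i ≤ n ∧ visit n f i = v := by
  have hle : ∀ i, i ≤ n → visit n f i ≤ n := by
    rintro (_ | i) hi
    · exact Nat.zero_le _
    · exact (visit_succ_spec hf hi).2.1
  have himg : (Finset.range (n + 1)).image (visit n f) = Finset.range (n + 1) := by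
    apply Finset.eq_of_subset_of_card_le
    · intro x hx
      obtain ⟨i, hi, rfl⟩ := Finset.mem_image.1 hx
      have := hle i (Nat.lt_succ_iff.1 (Finset.mem_range.1 hi))
      exact Finset.mem_range.2 (by omega)
    · rw [Finset.card_image_of_injOn]
      intro a ha b hb hab
      simp only [Finset.coe_range, Set.mem_Iio] at ha hb
      exact visit_injOn hf (by omega) (by omega) hab
  have hmem : v ∈ (Finset.range (n + 1)).image (visit n f) := by
    rw [himg]; exact Finset.mem_range.2 (by omega)
  obtain ⟨i, hi, rfl⟩ := Finset.mem_image.1 hmem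
  exact ⟨i, Nat.lt_succ_iff.1 (Finset.mem_range.1 hi), rfl⟩

lemma wearyInv_visit {n : ℕ} {f : ℕ → ℕ} (hf : IsCayleyTree n f) {i : ℕ} (hi : i ≤ n) :
    wearyInv n f (visit n f i) = i := by
  have hmem : i ∈ {j | weary n f j = visit n f i} := weary_eq_visit hi
  have hle : wearyInv n f (visit n f i) ≤ i := Nat.sInf_le hmem
  have hs : weary n f (wearyInv n f (visit n f i)) = visit n f i := Nat.sInf_mem ⟨i, hmem⟩
  rw [weary_eq_visit (hle.trans hi)] at hs
  exact visit_injOn hf (hle.trans hi) hi hs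

lemma spotList_length (π : ℕ → ℕ) (c : ℕ) : (spotList π c).length = c := by
  induction c with
  | zero => rfl
  | succ c ih => simp [spotList, ih]

lemma spot_succ (π : ℕ → ℕ) (c : ℕ) :
    spot π (c + 1) = sInf {s | π (c + 1) ≤ s ∧ s ∉ spotList π c} := by
  simp [spot, spotList, List.getD_eq_getElem?_getD, spotList_length]

lemma mem_spotList {π : ℕ → ℕ} {c s : ℕ} :
    s ∈ spotList π c ↔ ∃ d, 1 ≤ d ∧ d ≤ c ∧ spot π d = s := by
  induction c with
  | zero => simp [spotList]
  | succ c ih =>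
    simp only [spotList, List.mem_append, List.mem_singleton, ih, ← spot_succ]
    constructor
    · rintro (⟨d, h1, h2, h3⟩ | rfl)
      · exact ⟨d, h1, by omega, h3⟩
      · exact ⟨c + 1, by omega, le_rfl, rfl⟩
    · rintro ⟨d, h1, h2, h3⟩
      rcases Nat.lt_or_ge c d with h | h
      · obtain rfl : d = c + 1 := by omega
        exact Or.inr h3.symm
      · exact Or.inl ⟨d, h1, h, h3⟩

/-- Car `c` parks at the spot numbered by the step at which vertex `c` is visited. From the
step after the visit of its parent, `c` is a candidate of the search, so every step before the
visit of `c` goes to a smaller vertex, that is, to a car which has already parked there. -/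
lemma spot_pref {n : ℕ} {f : ℕ → ℕ} (hf : IsCayleyTree n f) (c : ℕ) :
    ∀ i, 1 ≤ i → i ≤ n → visit n f i = c → spot (pref n f) c = i := by
  induction c using Nat.strong_induction_on with
  | _ c ih =>
    rintro (_ | i) hi1 hin hic
    · omega
    obtain ⟨hc1, hcn, hcnot, hfc⟩ := visit_succ_spec hf hin
    rw [hic] at hc1 hcn hcnot hfc
    obtain ⟨p, hpi, hp⟩ := mem_wearyList.1 hfc
    have hpref : pref n f c = p + 1 := by
      rw [pref, ← hp, wearyInv_visit hf (by omega)]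
    obtain ⟨d, rfl⟩ : ∃ d, c = d + 1 := ⟨c - 1, by omega⟩
    have hfree : i + 1 ∉ spotList (pref n f) d := by
      intro hmem
      obtain ⟨e, he1, hed, hes⟩ := mem_spotList.1 hmem
      obtain ⟨j, hjn, hj⟩ := visit_surjOn hf (show e ≤ n by omega)
      have hj1 : 1 ≤ j := by
        rcases Nat.eq_zero_or_pos j with rfl | h
        · simp only [visit] at hj; omega
        · exact h
      have := ih e (by omega) j hj1 hjn hj
      obtain rfl : j = i + 1 := by omega
      omega
    rw [spot_succ, hpref]
    apply le_antisymm
    · exact Nat.sInf_le ⟨by omega, hfree⟩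
    · refine le_csInf ⟨i + 1, by omega, hfree⟩ ?_
      rintro s ⟨hps, hs⟩
      by_contra! hlt
      apply hs
      obtain ⟨t, rfl⟩ : ∃ t, s = t + 1 := ⟨s - 1, by omega⟩
      have hdt : d + 1 ∉ wearyList n f t := fun h => by
        obtain ⟨j, hj, hjd⟩ := mem_wearyList.1 h
        exact hcnot (mem_wearyList.2 ⟨j, by omega, hjd⟩)
      have hle : visit n f (t + 1) ≤ d + 1 :=
        Nat.sInf_le ⟨hc1, hcn, hdt, mem_wearyList.2 ⟨p, by omega, hp⟩⟩
      have hne : visit n f (t + 1) ≠ d + 1 := fun h =>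
        hcnot (mem_wearyList.2 ⟨t + 1, by omega, h⟩)
      have hpos := (visit_succ_spec hf (show t < n by omega)).1
      exact mem_spotList.2 ⟨visit n f (t + 1), hpos, by omega,
        ih _ (by omega) (t + 1) (by omega) (by omega) rfl⟩

/-- The weary permutation of a Cayley tree coincides with the
bird's-eye permutation of its preference sequence: `ω_T = ω_{π_T}`. -/
theorem stmt13 (n : ℕ) (f : ℕ → ℕ) (hf : IsCayleyTree n f) :
    ∀ i, i ≤ n → weary n f i = birdsEye n (pref n f) i := by
  rintro (_ | i) hi
  · rw [weary_eq_visit hi]; simp [visit, birdsEye]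
  rw [weary_eq_visit hi, birdsEye, if_neg (Nat.succ_ne_zero i)]
  have hset : {c | 1 ≤ c ∧ c ≤ n ∧ spot (pref n f) c = i + 1} = {visit n f (i + 1)} := by
    ext c
    constructor
    · rintro ⟨hc1, hcn, hc⟩
      obtain ⟨j, hjn, rfl⟩ := visit_surjOn hf hcn
      have hj1 : 1 ≤ j := by
        rcases Nat.eq_zero_or_pos j with rfl | h
        · simp [visit] at hc1
        · exact h
      rw [spot_pref hf _ j hj1 hjn rfl] at hc
      exact Set.mem_singleton_iff.2 (by rw [hc])
    · rintro rfl
      obtain ⟨h1, h2, -, -⟩ := visit_succ_spec hf hi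
      exact ⟨h1, h2, spot_pref hf _ _ (by omega) hi rfl⟩
  rw [hset, csInf_singleton]

end WearyParking
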